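/- arXiv:2107.13768 — 2 statements merged into one kernel-verified Lean document; each statement's English description precedes it below -/
import Mathlib

section
/- Let κ ≥ 0. Let u ∈ C¹(ℝ) ∩ L²(ℝ) satisfy |u'(x)| ≤ |u(x) + (2/3)κ| for every x ∈ ℝ, let f ∈ W^{1,∞}(ℝ) ∩ L²(ℝ), and set g = u − f. Then ‖g‖_{L^∞(ℝ)} ≤ ‖g‖_{L²(ℝ)}^{2/3} ( 1 + (4/3)κ + √2 ‖g‖_{L²(ℝ)}^{2/3} + 2‖f‖_{L^∞(ℝ)} + 2‖f'‖_{L^∞(ℝ)} ). -/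
open MeasureTheory Real Filter Finset
open scoped ENNReal

noncomputable section

/-- The kernel `p(x) = ½ e^{-|x|}` of `(1 - ∂ₓ²)⁻¹` on `ℝ`. -/
def pker (x : ℝ) : ℝ := (1/2) * Real.exp (-|x|)

/-- The kernel `q(x) = ¼ e^{-2|x|}` of `(4 - ∂ₓ²)⁻¹` on `ℝ`. -/
def qker (x : ℝ) : ℝ := (1/4) * Real.exp (-(2*|x|))

/-- Convolution of two functions on `ℝ`. -/
def convol (f g : ℝ → ℝ) (x : ℝ) : ℝ := ∫ y, f (x - y) * g y

/-- `u` is a pointwise classical solution of the Degasperis-Procesi equation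
`∂ₜ u + ∂ₓ(½u² + p*((3/2)u² + 2κu)) = 0` for times `t ∈ T`. -/
def IsDPSolution (κ : ℝ) (T : Set ℝ) (u : ℝ → ℝ → ℝ) : Prop :=
  ∀ t ∈ T, ∀ x : ℝ,
    HasDerivAt (fun s => u s x)
      (-(deriv (fun y => (1/2) * (u t y)^2
          + convol pker (fun z => (3/2) * (u t z)^2 + 2*κ*(u t z)) y) x)) t

/-- The `c`-speed smooth solitary-wave profile of the DP equation:  even, smooth,
positive, strictly decreasing on `(0,∞)`, decaying at `±∞` and satisfying the
first-integral equation. -/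
structure IsSoliton (κ c : ℝ) (φ : ℝ → ℝ) : Prop where
  smooth : ContDiff ℝ (⊤ : ℕ∞) φ
  even : ∀ x, φ (-x) = φ x
  pos : ∀ x, 0 < φ x
  anti : StrictAntiOn φ (Set.Ioi 0)
  decay_top : Tendsto φ atTop (nhds 0)
  decay_bot : Tendsto φ atBot (nhds 0)
  eqn : ∀ x, (1/2)*(c - φ x)^2 * (deriv φ x)^2
      = (φ x)^2 * ((1/2)*(φ x)^2 - c * φ x + (2/3)*κ*(φ x) + (1/2)*c^2 - κ*c)


lemma aux_key (g : ℝ → ℝ) (B : ℝ) (hB : 0 < B) (hg : Differentiable ℝ g)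
    (hI : Integrable (fun x => g x ^ 2) volume)
    (hd : ∀ᵐ x ∂(volume : Measure ℝ), |deriv g x| ≤ |g x| + B) (x₀ : ℝ) (h0 : 0 ≤ g x₀) :
    g x₀ ^ 3 ≤ 3 * (∫ x, g x ^ 2) * (g x₀ + B) := by
  set φ : ℝ → ℝ := fun t => t ^ 2 / (|t| + B) with hφ
  have hpos : ∀ t : ℝ, 0 < |t| + B := fun t => by positivity
  have hφc : Continuous φ := by
    apply Continuous.div (by fun_prop) (by fun_prop)
    intro t; exact (hpos t).ne'
  set H : ℝ → ℝ := fun s => ∫ t in (0:ℝ)..s, φ t with hH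
  have hHd : ∀ s, HasDerivAt H (φ s) s := fun s =>
    intervalIntegral.integral_hasDerivAt_right (hφc.intervalIntegrable _ _)
      (hφc.stronglyMeasurableAtFilter _ _) hφc.continuousAt
  have hHc : Continuous H := continuous_iff_continuousAt.2 fun s => (hHd s).continuousAt
  have hH0 : H 0 = 0 := by simp [hH]
  have hlow : g x₀ ^ 3 / (3 * (g x₀ + B)) ≤ H (g x₀) := by
    have h1 : ∫ t in (0:ℝ)..(g x₀), t ^ 2 / (g x₀ + B) ≤ H (g x₀) := by
      apply intervalIntegral.integral_mono_on h0
      · apply Continuous.intervalIntegrable; fun_prop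
      · exact hφc.intervalIntegrable _ _
      · intro t ht
        simp only [hφ]
        have := hpos t
        rw [abs_of_nonneg ht.1] at *
        have := ht.2
        gcongr
    rw [intervalIntegral.integral_div, integral_pow] at h1
    refine le_trans (le_of_eq ?_) h1
    have : g x₀ + B ≠ 0 := by positivity
    field_simp
    norm_num
    ring
  have hHg : ∀ x, HasDerivAt (fun x => H (g x)) (φ (g x) * deriv g x) x := fun x =>
    (hHd (g x)).comp x (hg x).hasDerivAt
  have hbd : ∀ᵐ x ∂(volume : Measure ℝ), ‖φ (g x) * deriv g x‖ ≤ g x ^ 2 := by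
    filter_upwards [hd] with x hx
    have h2 : 0 ≤ φ (g x) := div_nonneg (sq_nonneg _) (hpos _).le
    rw [Real.norm_eq_abs, abs_mul, abs_of_nonneg h2]
    calc φ (g x) * |deriv g x| ≤ φ (g x) * (|g x| + B) := by gcongr
      _ = g x ^ 2 := by simp only [hφ]; exact div_mul_cancel₀ _ (hpos _).ne'
  have hint : Integrable (fun x => φ (g x) * deriv g x) volume := by
    refine hI.mono' ?_ hbd
    exact (((hφc.comp hg.continuous).measurable).mul (measurable_deriv g)).aestronglyMeasurable
  have hHle : H (g x₀) ≤ ∫ x, g x ^ 2 := by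
    apply le_of_forall_pos_le_add
    intro ε hε
    obtain ⟨δ, hδ, hδ'⟩ := Metric.continuousAt_iff.1 (hHc.continuousAt (x := 0)) ε hε
    obtain ⟨y, hy, hyδ⟩ : ∃ y, x₀ ≤ y ∧ |g y| < δ := by
      by_contra! hcon
      have hfin := hI.measure_ge_lt_top (ε := δ ^ 2) (by positivity)
      have hsub : Set.Ici x₀ ⊆ {a | δ ^ 2 ≤ g a ^ 2} := by
        intro a ha
        have := hcon a ha
        simp only [Set.mem_ofPred_eq]
        rw [← sq_abs (g a)]
        gcongr
      have := lt_of_le_of_lt (measure_mono hsub) hfin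
      simp at this
    have h3 : |H (g y)| < ε := by
      have := hδ' (x := g y) (by simpa [Real.dist_eq] using hyδ)
      simpa [hH0, Real.dist_eq] using this
    have hftc := intervalIntegral.integral_eq_sub_of_hasDerivAt (a := x₀) (b := y)
      (fun x _ => hHg x) hint.intervalIntegrable
    have h4 : |H (g y) - H (g x₀)| ≤ ∫ x, g x ^ 2 := by
      rw [← hftc, intervalIntegral.integral_of_le hy, ← Real.norm_eq_abs]
      calc _ ≤ ∫ x in Set.Ioc x₀ y, g x ^ 2 :=
            norm_integral_le_of_norm_le hI.integrableOn (ae_restrict_of_ae hbd)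
        _ ≤ _ := setIntegral_le_integral hI (Eventually.of_forall fun x => sq_nonneg _)
    have := abs_le.1 h4
    have := abs_lt.1 h3
    linarith
  have h5 := hlow.trans hHle
  rw [div_le_iff₀ (by positivity)] at h5
  linarith

lemma aux_abs (g : ℝ → ℝ) (B : ℝ) (hB : 0 < B) (hg : Differentiable ℝ g)
    (hI : Integrable (fun x => g x ^ 2) volume)
    (hd : ∀ᵐ x ∂(volume : Measure ℝ), |deriv g x| ≤ |g x| + B) (x₀ : ℝ) :
    |g x₀| ^ 3 ≤ 3 * (∫ x, g x ^ 2) * (|g x₀| + B) := by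
  rcases le_total 0 (g x₀) with h | h
  · rw [abs_of_nonneg h]; exact aux_key g B hB hg hI hd x₀ h
  · rw [abs_of_nonpos h]
    have := aux_key (fun x => - g x) B hB hg.neg (by simpa using hI)
      (by simpa [deriv.fun_neg] using hd) x₀ (by linarith)
    simpa using this

lemma aux_alg (M n A : ℝ) (hn : 0 ≤ n) (hA : 0 ≤ A)
    (h : M ^ 3 ≤ 3 * n ^ 3 * (M + (A + 1/10))) : M ≤ n * (1 + 2 * A + Real.sqrt 2 * n) := by
  by_contra! hc
  have hs : Real.sqrt 2 ^ 2 = 2 := Real.sq_sqrt (by norm_num)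
  have hs1 : (1.4:ℝ) ≤ Real.sqrt 2 := Real.le_sqrt_of_sq_le (by norm_num)
  rcases hn.eq_or_lt with h0 | h0
  · subst h0
    have : 0 < M := by simpa using hc
    have : 0 < M ^ 3 := by positivity
    norm_num at h; linarith
  obtain ⟨m, rfl⟩ : ∃ m, M = n * m := ⟨M / n, by field_simp⟩
  have hm : 1 + 2 * A + Real.sqrt 2 * n < m := lt_of_mul_lt_mul_left hc hn
  have h' : m ^ 3 ≤ 3 * (n * m + (A + 1/10)) := by
    have : 0 < n ^ 3 := by positivity
    refine le_of_mul_le_mul_left ?_ this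
    nlinarith
  have hm1 : 1 + 2 * A + 1.4 * n < m := by nlinarith
  have hm2 : 1 + 4 * A + 2.8 * n + 1.96 * n ^ 2 ≤ m ^ 2 := by
    have : (1 + 2 * A + 1.4 * n) ^ 2 ≤ m ^ 2 := by gcongr
    nlinarith [mul_nonneg hA hn, sq_nonneg A]
  have hmp : 1 ≤ m := by nlinarith
  have : m * (1 + 4 * A + 2.8 * n + 1.96 * n ^ 2) ≤ m ^ 3 := by
    calc _ ≤ m * m ^ 2 := by gcongr
      _ = m ^ 3 := by ring
  have h6 : 0.9 + 4 * A + 3 * n ≤ 1 + 4 * A + 2.8 * n + 1.96 * n ^ 2 := by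
    nlinarith [sq_nonneg (n - 0.05)]
  have h7 : m * (0.9 + 4 * A + 3 * n) ≤ m ^ 3 := le_trans (by gcongr) this
  nlinarith

/-- a priori `L^∞`–`L²` estimate.  If `u ∈ C¹ ∩ L²` satisfies the
pointwise gradient bound `|u'| ≤ |u + (2/3)κ|` and `f ∈ W^{1,∞} ∩ L²`, then the
sup-norm of `g = u - f` is controlled by a power of its `L²` norm. -/
theorem stmt_2 (κ : ℝ) (hκ : 0 ≤ κ) (u f : ℝ → ℝ)
    (hu1 : ContDiff ℝ 1 u) (hu2 : MemLp u 2 volume)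
    (hub : ∀ x, |deriv u x| ≤ |u x + (2/3)*κ|)
    (hfdiff : Differentiable ℝ f)
    (hfb : MemLp f ⊤ volume) (hf'b : MemLp (deriv f) ⊤ volume)
    (hf2 : MemLp f 2 volume) :
    eLpNorm (fun x => u x - f x) ⊤ volume ≤ ENNReal.ofReal
      (((eLpNorm (fun x => u x - f x) 2 volume).toReal) ^ ((2:ℝ)/3) *
        (1 + (4/3)*κ
          + Real.sqrt 2 * ((eLpNorm (fun x => u x - f x) 2 volume).toReal) ^ ((2:ℝ)/3)
          + 2 * (eLpNorm f ⊤ volume).toReal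
          + 2 * (eLpNorm (deriv f) ⊤ volume).toReal)) := by
  have hum : Differentiable ℝ u := hu1.differentiable (by norm_num)
  have hgd : Differentiable ℝ (fun x => u x - f x) := hum.sub hfdiff
  have hg2 : MemLp (fun x => u x - f x) 2 volume := hu2.sub hf2
  have hI : Integrable (fun x => (u x - f x) ^ 2) volume := hg2.integrable_sq
  set N := (eLpNorm (fun x => u x - f x) 2 volume).toReal with hN
  have hN0 : 0 ≤ N := ENNReal.toReal_nonneg
  have hNI : ∫ x, (u x - f x) ^ 2 = N ^ 2 := by
    have h1 := hg2.eLpNorm_eq_integral_rpow_norm (by norm_num) (by norm_num)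
    have h0 : 0 ≤ ∫ x, (u x - f x) ^ 2 := integral_nonneg fun x => sq_nonneg _
    rw [hN, h1, ENNReal.toReal_ofReal (by positivity)]
    simp only [ENNReal.toReal_ofNat, Real.rpow_ofNat, Real.norm_eq_abs, sq_abs]
    rw [← Real.rpow_natCast, ← Real.rpow_mul h0]
    norm_num
  set F := (eLpNorm f ⊤ volume).toReal with hF
  set F' := (eLpNorm (deriv f) ⊤ volume).toReal with hF'
  have hF0 : 0 ≤ F := ENNReal.toReal_nonneg
  have hF'0 : 0 ≤ F' := ENNReal.toReal_nonneg
  have key : ∀ h : ℝ → ℝ, MemLp h ⊤ volume →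
      ∀ᵐ x ∂(volume : Measure ℝ), |h x| ≤ (eLpNorm h ⊤ volume).toReal := by
    intro h hh
    filter_upwards [ae_le_eLpNormEssSup (f := h) (μ := volume)] with x hx
    rw [← eLpNorm_exponent_top] at hx
    have := ENNReal.toReal_mono hh.eLpNorm_ne_top hx
    simpa using this
  have hd : ∀ᵐ x ∂(volume : Measure ℝ), |deriv (fun x => u x - f x) x|
      ≤ |(fun x => u x - f x) x| + ((2/3*κ + F + F') + 1/10) := by
    filter_upwards [key f hfb, key _ hf'b] with x h1 h2
    rw [deriv_fun_sub (hum x) (hfdiff x)]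
    have h3 := hub x
    have h4 := abs_sub (deriv u x) (deriv f x)
    have h5 : |u x + 2/3*κ| ≤ |u x - f x| + |f x| + 2/3*κ := by
      have e : u x + 2/3*κ = (u x - f x) + f x + 2/3*κ := by ring
      rw [e]
      refine (abs_add_le _ _).trans ?_
      rw [abs_of_nonneg (by positivity : 0 ≤ 2/3*κ)]
      gcongr
      exact abs_add_le _ _
    linarith
  rw [eLpNorm_exponent_top]
  refine eLpNormEssSup_le_of_ae_bound (Eventually.of_forall fun x => ?_)
  have hx := aux_abs (fun x => u x - f x) _ (by positivity) hgd hI hd x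
  have hn3 : (N ^ ((2:ℝ)/3)) ^ 3 = N ^ 2 := by
    rw [← Real.rpow_natCast, ← Real.rpow_mul hN0]
    norm_num
  simp only [hNI] at hx
  rw [← hn3] at hx
  have := aux_alg _ (N ^ ((2:ℝ)/3)) (2/3*κ + F + F') (by positivity) (by positivity) hx
  rw [Real.norm_eq_abs]
  refine this.trans (le_of_eq ?_)
  ring
end
end

section
/- Let κ > 0, c > 2κ, and let φ : ℝ → ℝ be a bounded continuous function with φ' ∈ L²(ℝ), φ' ≠ 0. Let q(x) = ¼e^{−2|x|} and define the bounded self-adjoint operator 𝓛 on L²(ℝ) by (𝓛f)(x) = −φ(x)f(x) − 2κ(q*f)(x) + c( f(x) − 3(q*f)(x) ). Assume: (i) 𝓛φ' = 0; (ii) there exist λ̲ > 0 and χ ∈ L²(ℝ) with ‖χ‖_{L²} = 1 and 𝓛χ = −λ̲χ; (iii) there exists λ̄ > 0 such that (𝓛p, p)_{L²} ≥ λ̄‖p‖_{L²}² for every p orthogonal in L² to both χ and φ'; (iv) the subspace X₊ = (span{χ, φ'})^⊥ is invariant under 𝓛; (v) there exists ζ ∈ L²(ℝ) with 𝓛ζ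 = −(φ − 3q*φ) and (𝓛ζ, ζ)_{L²} < 0. Then there exist η > 0 and θ > 0 such that every y ∈ L²(ℝ) satisfying |∫_ℝ y (φ − 3q*φ) dx| + |∫_ℝ y (φ' − 3q*(φ')) dx| ≤ η ‖y‖_{L²} obeys (𝓛y, y)_{L²} ≥ θ ‖y‖_{L²}². -/
open MeasureTheory Real Filter Finset
open scoped ENNReal

noncomputable section

set_option maxHeartbeats 1000000 in
lemma dp_real_core (lam lambar a0 N0 E d γ G : ℝ) (hlam : 0 < lam) (hlb : 0 < lambar)
    (hN0 : 0 ≤ N0) (hD : N0 < lam * a0^2) (hE : 0 < E) (hd : 0 < d) (hG : 0 ≤ G) :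
    ∃ η > 0, ∃ θ > 0, ∀ a b P N M r Y ε1 ε2 : ℝ, 0 ≤ P → lambar * P ≤ N → M^2 ≤ N * N0 →
      ε1 = -lam * a * a0 + M → ε2 = a * γ + b * d + r → r^2 ≤ P * G →
      Y = a^2 + b^2 * E + P → |ε1| + |ε2| ≤ η * √Y → θ * Y ≤ -lam * a^2 + N := by
  set A := lam * a0^2 with hA
  have hApos : 0 < A := lt_of_le_of_lt hN0 hD
  obtain ⟨s, hs⟩ : ∃ s, s = (A - N0) / (2*A) := ⟨_, rfl⟩
  have hs0 : 0 < s := by rw [hs]; apply div_pos <;> linarith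
  have hsA : s * A = (A - N0)/2 := by rw [hs]; field_simp
  have hs1 : s ≤ 1/2 := by
    rw [hs, div_le_iff₀ (by linarith)]; linarith
  obtain ⟨K, hK⟩ : ∃ K, K = (1 + 1/s)/A := ⟨_, rfl⟩
  have hK0 : 0 < K := by rw [hK]; positivity
  obtain ⟨k, hk⟩ : ∃ k, k = s/2 * min lam lambar := ⟨_, rfl⟩
  have hk0 : 0 < k := by rw [hk]; have := lt_min hlam hlb; positivity
  have hk1 : k ≤ s/2*lam := by rw [hk]; gcongr; exact min_le_left _ _
  have hk2 : k ≤ s/2*lambar := by rw [hk]; gcongr; exact min_le_right _ _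
  obtain ⟨W, hW⟩ : ∃ W, W = 3*E/d^2 := ⟨_, rfl⟩
  have hW0 : 0 < W := by rw [hW]; positivity
  have hWd : W * d^2 = 3*E := by rw [hW]; field_simp
  obtain ⟨T, hT⟩ : ∃ T, T = γ^2 + G := ⟨_, rfl⟩
  have hT0 : 0 ≤ T := by rw [hT]; positivity
  obtain ⟨k1, hk1'⟩ : ∃ k1, k1 = k/(1+W*T) := ⟨_, rfl⟩
  have hk10 : 0 < k1 := by rw [hk1']; positivity
  have hkk : k1 * (1+W*T) = k := by rw [hk1']; field_simp
  obtain ⟨h2, hh2⟩ : ∃ h2, h2 = k1 / (2*(k1*W+2*K)) := ⟨_, rfl⟩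
  have h20 : 0 < h2 := by rw [hh2]; positivity
  have h2e : h2 * (k1*W+2*K) = k1/2 := by rw [hh2]; field_simp
  refine ⟨√h2, Real.sqrt_pos.2 h20, k1/2, by positivity, ?_⟩
  intro a b P N M r Y ε1 ε2 hP hN hM h1 h2' hr hY hle
  have hN' : 0 ≤ N := le_trans (by positivity) hN
  have hY0 : 0 ≤ Y := by rw [hY]; positivity
  have hη : √h2 * √Y = √(h2*Y) := (Real.sqrt_mul h20.le Y).symm
  rw [hη] at hle
  have he1 : ε1^2 ≤ h2 * Y := by
    rw [← Real.sq_sqrt (show 0 ≤ h2*Y by positivity), ← sq_abs ε1]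
    have := abs_nonneg ε2
    gcongr; linarith
  have he2 : ε2^2 ≤ h2 * Y := by
    rw [← Real.sq_sqrt (show 0 ≤ h2*Y by positivity), ← sq_abs ε2]
    have := abs_nonneg ε1
    gcongr; linarith
  -- main bound
  have hmain : lam * a^2 ≤ (1-s)*N + K*ε1^2 := by
    have e1 : lam*a^2*A = (M-ε1)^2 := by rw [h1, hA]; ring
    have e2 : (M-ε1)^2 ≤ (1+s)*M^2 + (1+1/s)*ε1^2 := by
      have : (1+s)*M^2 + (1+1/s)*ε1^2 - (M-ε1)^2 = (s*M+ε1)^2/s := by field_simp; ring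
      have h' : 0 ≤ (s*M+ε1)^2/s := by positivity
      linarith
    have e3 : (1+s)*N0 ≤ (1-s)*A := by
      have : s*N0 ≤ s*A := by gcongr
      linarith
    have e4 : (1+s)*M^2 ≤ (1-s)*A*N := by
      calc (1+s)*M^2 ≤ (1+s)*(N*N0) := by gcongr
        _ = ((1+s)*N0)*N := by ring
        _ ≤ _ := by gcongr
    have e5 : K * A = 1+1/s := by rw [hK]; field_simp
    have : lam*a^2*A ≤ ((1-s)*N + K*ε1^2)*A := by
      rw [e1]; calc _ ≤ _ := e2
        _ ≤ (1-s)*A*N + (K*A)*ε1^2 := by rw [e5]; linarith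
        _ = _ := by ring
    exact le_of_mul_le_mul_right this hApos
  have hB1 : k*(a^2+P) - 2*K*ε1^2 ≤ -lam*a^2 + N := by
    have f1 : k*a^2 ≤ s/2*lam*a^2 := by gcongr
    have f2 : k*P ≤ s/2*N := by
      calc k*P ≤ s/2*lambar*P := by gcongr
        _ = s/2*(lambar*P) := by ring
        _ ≤ _ := by gcongr
    have f3 : 0 ≤ K*ε1^2 := by positivity
    have f4 : s/2*(lam*a^2) ≤ s/2*((1-s)*N + K*ε1^2) := by gcongr
    have f5 : 0 ≤ s*s*N := by positivity
    have f6 : s*(K*ε1^2) ≤ 1/2*(K*ε1^2) := by gcongr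
    linarith
  have hb : b^2*E ≤ W*(ε2^2 + T*(a^2+P)) := by
    have g1 : (b*d)^2 ≤ 3*(ε2^2 + (a*γ)^2 + r^2) := by
      have : b*d = ε2 - a*γ - r := by rw [h2']; ring
      rw [this]
      nlinarith [sq_nonneg (ε2 + a*γ), sq_nonneg (ε2+r), sq_nonneg (a*γ - r)]
    have g2 : (a*γ)^2 + r^2 ≤ T*(a^2+P) := by
      rw [hT]; nlinarith [mul_nonneg hG (sq_nonneg a), mul_nonneg hP (sq_nonneg γ)]
    have g3 : (b*d)^2 ≤ 3*(ε2^2 + T*(a^2+P)) := by linarith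
    have g4 : W*(b*d)^2 ≤ W*(3*(ε2^2 + T*(a^2+P))) := by gcongr
    have g5 : W*(b*d)^2 = 3*(b^2*E) := by rw [mul_pow]; linear_combination b^2*hWd
    linarith
  have hYb : k1*Y ≤ k*(a^2+P) + k1*W*ε2^2 := by
    have : Y ≤ (1+W*T)*(a^2+P) + W*ε2^2 := by rw [hY]; linarith
    calc k1*Y ≤ k1*((1+W*T)*(a^2+P) + W*ε2^2) := by gcongr
      _ = _ := by rw [← hkk]; ring
  have z1 : k1*W*ε2^2 ≤ k1*W*(h2*Y) := by gcongr
  have z2 : 2*K*ε1^2 ≤ 2*K*(h2*Y) := by gcongr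
  have z3 : k1*W*(h2*Y) + 2*K*(h2*Y) = k1/2*Y := by rw [← h2e]; ring
  linarith

lemma dp_cs {V : Type*} [AddCommGroup V] [Module ℝ V] (B : V →ₗ[ℝ] V →ₗ[ℝ] ℝ)
    (hs : ∀ u v, B u v = B v u) (u v : V) (h : ∀ t s : ℝ, 0 ≤ B (t • u + s • v) (t • u + s • v)) :
    (B u v)^2 ≤ B v v * B u u := by
  have h' : ∀ t s : ℝ, 0 ≤ t^2 * B u u + 2*t*s*B u v + s^2 * B v v := by
    intro t s
    have := h t s
    simp only [map_add, map_smul, LinearMap.add_apply, LinearMap.smul_apply, smul_eq_mul] at this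
    rw [hs v u] at this
    linarith
  have := discrim_le_zero (a := B u u) (b := 2 * B u v) (c := B v v)
    (fun t => by have := h' t 1; nlinarith)
  rw [discrim] at this
  nlinarith

lemma dp_abstract {V : Type*} [AddCommGroup V] [Module ℝ V] (I B : V →ₗ[ℝ] V →ₗ[ℝ] ℝ)
    (Is : ∀ u v, I u v = I v u) (Ip : ∀ u, 0 ≤ I u u) (Bs : ∀ u v, B u v = B v u)
    (χ e ζ g : V) (lam lambar : ℝ) (hlam : 0 < lam) (hlb : 0 < lambar)
    (hχ : I χ χ = 1) (hBχ : ∀ y, B χ y = -lam * I χ y) (hBe : ∀ y, B e y = 0)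
    (hee : 0 < I e e) (heg : 0 < I e g)
    (hco : ∀ p, I p χ = 0 → I p e = 0 → lambar * I p p ≤ B p p) (hζ : B ζ ζ < 0) :
    ∃ η > 0, ∃ θ > 0, ∀ y, |B ζ y| + |I y g| ≤ η * √(I y y) → θ * I y y ≤ B y y := by
  have hχe : I χ e = 0 := by
    have h1 := hBχ e
    rw [Bs, hBe] at h1
    rcases mul_eq_zero.1 h1.symm with h | h
    · linarith
    · exact h
  have heχ : I e χ = 0 := by rw [Is]; exact hχe
  -- decomposition
  have hdec : ∀ y : V, ∃ a b : ℝ, ∃ p : V, y = a • χ + b • e + p ∧ I p χ = 0 ∧ I p e = 0 := by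
    intro y
    refine ⟨I y χ, I y e / I e e, y - I y χ • χ - (I y e / I e e) • e, by abel, ?_, ?_⟩
    · simp [hχ, heχ]
    · simp [hχe]; field_simp; simp
  obtain ⟨a0, b0, p0, hz, hp0χ, hp0e⟩ := hdec ζ
  have hBχ' : ∀ y, B y χ = -lam * I χ y := fun y => by rw [Bs, hBχ]
  have hBe' : ∀ y, B y e = 0 := fun y => by rw [Bs, hBe]
  have hp0χ' : I χ p0 = 0 := by rw [Is]; exact hp0χ
  have hB0 : B ζ ζ = -lam * a0^2 + B p0 p0 := by
    rw [hz]; simp [hBχ, hBχ', hBe, hBe', hχ, hχe, hp0χ']; ring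
  have hNn : ∀ p, I p χ = 0 → I p e = 0 → 0 ≤ B p p := fun p h1 h2 =>
    le_trans (mul_nonneg hlb.le (Ip p)) (hco p h1 h2)
  obtain ⟨η, hη, θ, hθ, H⟩ := dp_real_core lam lambar a0 (B p0 p0) (I e e) (I e g) (I χ g) (I g g)
    hlam hlb (hNn p0 hp0χ hp0e) (by linarith) hee heg (Ip g)
  refine ⟨η, hη, θ, hθ, fun y hy => ?_⟩
  obtain ⟨a, b, p, hyd, hpχ, hpe⟩ := hdec y
  have hpχ' : I χ p = 0 := by rw [Is]; exact hpχ
  have hpe' : I e p = 0 := by rw [Is]; exact hpe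
  have hByy : B y y = -lam * a^2 + B p p := by
    rw [hyd]; simp [hBχ, hBχ', hBe, hBe', hχ, hχe, hpχ']; ring
  rw [hByy]
  refine H a b (I p p) (B p p) (B p0 p) (I p g) (I y y) (B ζ y) (I y g) (Ip p) (hco p hpχ hpe)
    ?_ ?_ ?_ ?_ ?_ hy
  · exact dp_cs B Bs p0 p (fun t s => hNn _ (by simp [hpχ, hp0χ]) (by simp [hpe, hp0e]))
  · rw [hz, hyd]; simp [hBχ, hBχ', hBe, hBe', hχ, hχe, hpχ', hp0χ']; ring
  · rw [hyd]; simp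
  · rw [mul_comm]; exact dp_cs I Is p g (fun t s => Ip _)
  · rw [hyd]; simp [hχ, hχe, heχ, hpχ, hpχ', hpe, hpe']; ring

lemma q_nonneg (x : ℝ) : 0 ≤ qker x := by unfold qker; positivity
lemma q_le (x : ℝ) : qker x ≤ 1/4 := by
  unfold qker
  have : Real.exp (-(2*|x|)) ≤ 1 := Real.exp_le_one_iff.2 (by have := abs_nonneg x; linarith)
  linarith
lemma q_cont : Continuous qker := by unfold qker; fun_prop
lemma q_symm (x y : ℝ) : qker (x - y) = qker (y - x) := by unfold qker; rw [abs_sub_comm]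
lemma q_int_val : ∫ x, qker x = 1/4 := by
  unfold qker
  rw [integral_comp_abs (f := fun x => (1/4) * Real.exp (-(2*x))), integral_const_mul]
  have := integral_exp_mul_Ioi (a := -2) (by norm_num) 0
  simp only [← neg_mul]
  rw [this]; norm_num
lemma q_integrable : Integrable qker := by
  by_contra h
  have := integral_undef h
  rw [q_int_val] at this
  norm_num at this
lemma q_shift_integrable (x : ℝ) : Integrable (fun y => qker (x - y)) :=
  q_integrable.comp_sub_left x
lemma q_shift_val (x : ℝ) : ∫ y, qker (x - y) = 1/4 := by
  rw [integral_sub_left_eq_self qker volume x, q_int_val]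

lemma q_mul_int {f : ℝ → ℝ} (hf : Integrable f) (x : ℝ) : Integrable (fun y => qker (x-y) * f y) := by
  refine hf.bdd_mul (c := 1/4) (q_cont.comp (by fun_prop)).aestronglyMeasurable
    (Eventually.of_forall fun y => ?_)
  rw [Real.norm_of_nonneg (q_nonneg _)]; exact q_le _

lemma q_mul_int2 {f : ℝ → ℝ} (hf : MemLp f 2 volume) (x : ℝ) :
    Integrable (fun y => qker (x-y) * f y) := by
  have h2 := q_mul_int hf.integrable_sq x
  refine ((q_shift_integrable x).add h2).mono'
    ((q_cont.comp (by fun_prop)).aestronglyMeasurable.mul hf.1) (Eventually.of_forall fun y => ?_)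
  simp only [Pi.add_apply, norm_mul, Real.norm_eq_abs, abs_of_nonneg (q_nonneg _)]
  have : |f y| ≤ 1 + f y^2 := by
    rw [← sq_abs (f y)]; nlinarith [sq_nonneg (|f y| - 1), abs_nonneg (f y)]
  nlinarith [q_nonneg (x-y)]

lemma q_cs {f : ℝ → ℝ} (hf : MemLp f 2 volume) (x : ℝ) :
    (convol qker f x)^2 ≤ 1/4 * convol qker (fun y => f y^2) x := by
  set m := convol qker f x with hm
  have h0 : 0 ≤ ∫ y, qker (x-y) * (f y - 4*m)^2 :=
    integral_nonneg fun y => mul_nonneg (q_nonneg _) (sq_nonneg _)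
  have h1 : ∫ y, qker (x-y) * (f y - 4*m)^2
      = ∫ y, (qker (x-y) * f y^2 - (8*m) * (qker (x-y) * f y) + (16*m^2) * qker (x-y)) := by
    congr 1; ext y; ring
  have hs : Integrable (fun y => qker (x-y) * f y^2 - (8*m) * (qker (x-y) * f y)) :=
    (q_mul_int hf.integrable_sq x).sub ((q_mul_int2 hf x).const_mul _)
  rw [h1, integral_add hs
    ((q_shift_integrable x).const_mul _), integral_sub (q_mul_int hf.integrable_sq x)
    ((q_mul_int2 hf x).const_mul _), integral_const_mul, integral_const_mul, q_shift_val] at h0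
  have h2 : ∫ y, qker (x-y) * f y = m := rfl
  have h3 : ∫ y, qker (x-y) * f y^2 = convol qker (fun y => f y^2) x := rfl
  rw [h2, h3] at h0
  linarith

lemma q_prod_int {f : ℝ → ℝ} (hf : Integrable f) :
    Integrable (fun p : ℝ × ℝ => qker (p.1 - p.2) * f p.2) (volume.prod volume) := by
  have := hf.convolution_integrand (ContinuousLinearMap.mul ℝ ℝ) q_integrable
  simpa [mul_comm] using this

lemma q_conv_int {f : ℝ → ℝ} (hf : Integrable f) : Integrable (convol qker f) :=
  (q_prod_int hf).integral_prod_left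

lemma q_conv_val {f : ℝ → ℝ} (hf : Integrable f) : ∫ x, convol qker f x = 1/4 * ∫ x, f x := by
  unfold convol
  rw [integral_integral_swap (q_prod_int hf)]
  have : ∀ y, ∫ x, qker (x - y) * f y = 1/4 * f y := fun y => by
    rw [integral_mul_const, integral_sub_right_eq_self qker y, q_int_val]
  simp_rw [this]
  rw [integral_const_mul]

lemma q_prod_meas {f : ℝ → ℝ} (hf : AEStronglyMeasurable f volume) :
    AEStronglyMeasurable (fun p : ℝ × ℝ => qker (p.1 - p.2) * f p.2) (volume.prod volume) :=
  ((q_cont.comp (by fun_prop : Continuous fun p : ℝ × ℝ => p.1 - p.2)).aestronglyMeasurable).mul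
    hf.comp_snd

lemma q_memLp {f : ℝ → ℝ} (hf : MemLp f 2 volume) : MemLp (convol qker f) 2 volume := by
  have hm : AEStronglyMeasurable (convol qker f) volume := (q_prod_meas hf.1).integral_prod_right'
  rw [memLp_two_iff_integrable_sq hm]
  refine ((q_conv_int hf.integrable_sq).const_mul (1/4)).mono' (hm.pow 2)
    (Eventually.of_forall fun x => ?_)
  rw [Real.norm_of_nonneg (sq_nonneg _)]
  exact q_cs hf x

lemma q_sq_le {f : ℝ → ℝ} (hf : MemLp f 2 volume) :
    ∫ x, (convol qker f x)^2 ≤ 1/16 * ∫ x, f x^2 := by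
  calc _ ≤ ∫ x, 1/4 * convol qker (fun y => f y^2) x :=
        integral_mono (q_memLp hf).integrable_sq ((q_conv_int hf.integrable_sq).const_mul _)
          (fun x => q_cs hf x)
    _ = _ := by rw [integral_const_mul, q_conv_val hf.integrable_sq]; ring

lemma mul_int {f g : ℝ → ℝ} (hf : MemLp f 2 volume) (hg : MemLp g 2 volume) :
    Integrable (fun x => f x * g x) := hf.integrable_mul hg

lemma q_form_le {f : ℝ → ℝ} (hf : MemLp f 2 volume) :
    ∫ x, convol qker f x * f x ≤ 1/4 * ∫ x, f x^2 := by
  have h := q_sq_le hf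
  calc _ ≤ ∫ x, (2 * (convol qker f x)^2 + 1/8 * f x^2) :=
        integral_mono (mul_int (q_memLp hf) hf)
          (((q_memLp hf).integrable_sq.const_mul _).add (hf.integrable_sq.const_mul _))
          (fun x => by nlinarith [sq_nonneg (4 * convol qker f x - f x)])
    _ = 2 * (∫ x, (convol qker f x)^2) + 1/8 * ∫ x, f x^2 := by
        rw [integral_add ((q_memLp hf).integrable_sq.const_mul _) (hf.integrable_sq.const_mul _),
          integral_const_mul, integral_const_mul]
    _ ≤ _ := by linarith

lemma q_form_symm {f g : ℝ → ℝ} (hf : MemLp f 2 volume) (hg : MemLp g 2 volume) :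
    ∫ x, convol qker f x * g x = ∫ x, convol qker g x * f x := by
  have hi : Integrable (fun p : ℝ × ℝ => qker (p.1 - p.2) * f p.2 * g p.1)
      (volume.prod volume) := by
    have h2 := (q_prod_int hg.integrable_sq).swap
    refine ((q_prod_int hf.integrable_sq).add h2).mono' ((q_prod_meas hf.1).mul hg.1.comp_fst)
      (Eventually.of_forall fun p => ?_)
    simp only [Pi.add_apply, Function.comp_apply, Prod.fst_swap, Prod.snd_swap, norm_mul,
      Real.norm_eq_abs, abs_of_nonneg (q_nonneg _)]
    rw [q_symm p.2 p.1, ← mul_add, mul_assoc]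
    gcongr
    · exact q_nonneg _
    · rw [← sq_abs (f p.2), ← sq_abs (g p.1)]
      nlinarith [sq_nonneg (|f p.2| - |g p.1|), sq_nonneg (|f p.2|), sq_nonneg (|g p.1|)]
  unfold convol
  simp_rw [← integral_mul_const]
  rw [integral_integral_swap hi]
  congr 1; ext y; congr 1; ext x
  rw [q_symm]; ring

lemma convol_add {f g : ℝ → ℝ} (hf : MemLp f 2 volume) (hg : MemLp g 2 volume) (x : ℝ) :
    convol qker (f + g) x = convol qker f x + convol qker g x := by
  unfold convol
  rw [← integral_add (q_mul_int2 hf x) (q_mul_int2 hg x)]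
  congr 1; ext y; simp [mul_add]

lemma convol_smul (r : ℝ) (f : ℝ → ℝ) (x : ℝ) :
    convol qker (r • f) x = r * convol qker f x := by
  unfold convol
  rw [← integral_const_mul]
  congr 1; ext y; simp; ring

lemma norm_eq {f : ℝ → ℝ} (hf : MemLp f 2 volume) :
    (eLpNorm f 2 volume).toReal = √(∫ x, f x^2) := by
  rw [hf.eLpNorm_eq_integral_rpow_norm (by norm_num) (by norm_num), ENNReal.toReal_ofReal (by positivity)]
  rw [Real.sqrt_eq_rpow]
  norm_num

/-- square integrable functions as a submodule of functions -/
def L2V : Submodule ℝ (ℝ → ℝ) where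
  carrier := {f | MemLp f 2 volume}
  add_mem' h1 h2 := h1.add h2
  zero_mem' := MemLp.zero
  smul_mem' c _ h := h.const_smul c

def Iform : L2V →ₗ[ℝ] L2V →ₗ[ℝ] ℝ :=
  LinearMap.mk₂ ℝ (fun f g => ∫ x, f.1 x * g.1 x)
    (fun f g h => by
      rw [← integral_add (mul_int f.2 h.2) (mul_int g.2 h.2)]
      congr 1; ext x; simp [add_mul])
    (fun r f g => by
      rw [smul_eq_mul, ← integral_const_mul]; congr 1; ext x; simp [mul_assoc])
    (fun f g h => by
      rw [← integral_add (mul_int f.2 g.2) (mul_int f.2 h.2)]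
      congr 1; ext x; simp [mul_add])
    (fun r f g => by
      rw [smul_eq_mul, ← integral_const_mul]; congr 1; ext x; simp; ring)

/-- the operator `w f - k q*f` -/
def dpOp (w : ℝ → ℝ) (k : ℝ) (hc : Continuous w) (hb : ∃ M, ∀ x, |w x| ≤ M) : L2V →ₗ[ℝ] L2V where
  toFun f := ⟨fun x => w x * f.1 x - k * convol qker f.1 x, by
    obtain ⟨M, hM⟩ := hb
    have hf : MemLp f.1 2 volume := f.2
    have h1 : MemLp (fun x => w x * f.1 x) 2 volume := by
      refine (hf.const_mul M).mono (hc.aestronglyMeasurable.mul hf.1)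
        (Eventually.of_forall fun x => ?_)
      simp only [norm_mul, Real.norm_eq_abs]
      exact mul_le_mul_of_nonneg_right ((hM x).trans (le_abs_self M)) (abs_nonneg _)
    exact h1.sub ((q_memLp hf).const_mul k)⟩
  map_add' f g := by
    ext x
    have := convol_add f.2 g.2 x
    simp only [Submodule.coe_add, Pi.add_apply, this]; ring
  map_smul' r f := by
    ext x
    simp only [Submodule.coe_smul, convol_smul, Pi.smul_apply, smul_eq_mul, RingHom.id_apply]; ring

lemma Bsymm (w : ℝ → ℝ) (k : ℝ) (hc : Continuous w) (hb : ∃ M, ∀ x, |w x| ≤ M) (f g : L2V) :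
    Iform (dpOp w k hc hb f) g = Iform (dpOp w k hc hb g) f := by
  have hh : ∀ f g : L2V, Iform (dpOp w k hc hb f) g
      = (∫ x, w x * f.1 x * g.1 x) - k * ∫ x, convol qker f.1 x * g.1 x := by
    intro f g
    have hi := mul_int (q_memLp f.2) g.2
    have hi2 : Integrable (fun x => w x * f.1 x * g.1 x) := by
      obtain ⟨M, hM⟩ := hb
      have := (mul_int f.2 g.2).bdd_mul (c := M) hc.aestronglyMeasurable
        (Eventually.of_forall fun x => hM x)
      simpa [mul_assoc] using this
    rw [← integral_const_mul, ← integral_sub hi2 (hi.const_mul k)]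
    show ∫ x, (w x * f.1 x - k * convol qker f.1 x) * g.1 x = _
    congr 1; ext x; ring
  rw [hh, hh, q_form_symm f.2 g.2]
  congr 2; ext x; ring

lemma local_test (w : ℝ → ℝ) (k lambar : ℝ) (hk : 0 < k) (hl : 0 < lambar) (hc : Continuous w)
    (hb : ∃ M, ∀ x, |w x| ≤ M)
    (x0 : ℝ) (hx0 : w x0 = 0) (χ : ℝ → ℝ) (hχ : MemLp χ 2 volume) :
    ∃ p : ℝ → ℝ, MemLp p 2 volume ∧ ∫ x, p x * χ x = 0 ∧
      ∫ x, (w x * p x - k * convol qker p x) * p x < lambar * ∫ x, p x^2 := by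
  obtain ⟨δ, hδ, hw⟩ := Metric.continuous_iff.1 hc x0 (lambar/4) (by positivity)
  simp only [hx0, Real.dist_eq, sub_zero] at hw
  obtain ⟨h, hh0, hh1, hh2⟩ : ∃ h > 0, h < δ ∧ h ≤ 2*lambar^2/k^2 := by
    refine ⟨min (δ/2) (2*lambar^2/k^2), by positivity, ?_, min_le_right _ _⟩
    have := min_le_left (δ/2) (2*lambar^2/k^2)
    linarith
  set A1 := Set.Ioc (x0-h) x0 with hA1
  set A2 := Set.Ioc x0 (x0+h) with hA2
  obtain ⟨a, b, hab, hne⟩ : ∃ a b : ℝ, a * (∫ x in A1, χ x) + b * (∫ x in A2, χ x) = 0 ∧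
      0 < a^2 + b^2 := by
    by_cases h1 : (∫ x in A1, χ x) = 0
    · exact ⟨1, 0, by simp [h1], by norm_num⟩
    · exact ⟨-(∫ x in A2, χ x), ∫ x in A1, χ x, by ring, by positivity⟩
  have m1 : MeasurableSet A1 := measurableSet_Ioc
  have m2 : MeasurableSet A2 := measurableSet_Ioc
  have f1 : volume A1 ≠ ⊤ := by simp [hA1]
  have f2 : volume A2 ≠ ⊤ := by simp [hA2]
  have v1 : volume.real A1 = h := by simp [hA1, hh0.le]
  have v2 : volume.real A2 = h := by simp [hA2, hh0.le]
  have hdisj : ∀ x, x ∈ A1 → x ∉ A2 := fun x h1 h2 => absurd h1.2 (not_le.2 h2.1)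
  set p : ℝ → ℝ := A1.indicator (fun _ => a) + A2.indicator (fun _ => b) with hp
  have hpL : MemLp p 2 volume :=
    (memLp_indicator_const 2 m1 a (Or.inr f1)).add (memLp_indicator_const 2 m2 b (Or.inr f2))
  have i1 : Integrable (A1.indicator (fun _ => (1:ℝ))) :=
    (integrable_indicator_iff m1).2 (integrableOn_const f1)
  have i2 : Integrable (A2.indicator (fun _ => (1:ℝ))) :=
    (integrable_indicator_iff m2).2 (integrableOn_const f2)
  have e1 : ∫ x, A1.indicator (fun _ => (1:ℝ)) x = h := by
    rw [integral_indicator m1]; simp [v1]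
  have e2 : ∫ x, A2.indicator (fun _ => (1:ℝ)) x = h := by
    rw [integral_indicator m2]; simp [v2]
  have hn : ∫ x, p x^2 = (a^2+b^2)*h := by
    have : ∀ x, p x^2 = a^2 * A1.indicator (fun _ => (1:ℝ)) x
        + b^2 * A2.indicator (fun _ => (1:ℝ)) x := by
      intro x
      by_cases h1 : x ∈ A1
      · simp [hp, h1, hdisj x h1]
      · by_cases h2 : x ∈ A2 <;> simp [hp, h1, h2]
    simp_rw [this]
    rw [integral_add (i1.const_mul _) (i2.const_mul _), integral_const_mul, integral_const_mul,
      e1, e2]; ring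
  have hn0 : 0 < ∫ x, p x^2 := by rw [hn]; positivity
  have hχ1 : IntegrableOn χ A1 := by
    have : IsFiniteMeasure (volume.restrict A1) := ⟨by simpa using f1.lt_top⟩
    exact (hχ.restrict A1).integrable (by norm_num)
  have hχ2 : IntegrableOn χ A2 := by
    have : IsFiniteMeasure (volume.restrict A2) := ⟨by simpa using f2.lt_top⟩
    exact (hχ.restrict A2).integrable (by norm_num)
  refine ⟨p, hpL, ?_, ?_⟩
  · have : ∀ x, p x * χ x = a * A1.indicator χ x + b * A2.indicator χ x := by
      intro x
      by_cases h1 : x ∈ A1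
      · simp [hp, h1, hdisj x h1]
      · by_cases h2 : x ∈ A2 <;> simp [hp, h1, h2]
    simp_rw [this]
    rw [integral_add (((integrable_indicator_iff m1).2 hχ1).const_mul _)
      (((integrable_indicator_iff m2).2 hχ2).const_mul _), integral_const_mul, integral_const_mul,
      integral_indicator m1, integral_indicator m2, hab]
  · set n := ∫ x, p x^2 with hnn
    have hu : ∀ x, (convol qker p x)^2 ≤ 1/16 * n := by
      intro x
      have h1 := q_cs hpL x
      have h2 : convol qker (fun y => p y^2) x ≤ ∫ y, 1/4 * p y^2 :=
        integral_mono (q_mul_int hpL.integrable_sq x) (hpL.integrable_sq.const_mul _)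
          (fun y => mul_le_mul_of_nonneg_right (q_le _) (sq_nonneg _))
      rw [integral_const_mul] at h2
      linarith
    have hpt : ∀ x, (w x * p x - k * convol qker p x) * p x ≤ lambar/2 * p x^2
        + k^2*n/(16*lambar) * (A1.indicator (fun _ => (1:ℝ)) x
        + A2.indicator (fun _ => (1:ℝ)) x) := by
      intro x
      by_cases hx : x ∈ A1 ∨ x ∈ A2
      · have hxd : |x - x0| < δ := by
          rw [abs_lt]
          rcases hx with hx | hx
          · exact ⟨by linarith [hx.1], by linarith [hx.2]⟩
          · exact ⟨by linarith [hx.1], by linarith [hx.2]⟩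
        have hi : A1.indicator (fun _ => (1:ℝ)) x + A2.indicator (fun _ => (1:ℝ)) x = 1 := by
          by_cases h1 : x ∈ A1
          · simp [h1, hdisj x h1]
          · simp [h1, hx.resolve_left h1]
        rw [hi, mul_one]
        have hwx : w x ≤ lambar/4 := (le_abs_self _).trans (hw x hxd).le
        have g1 : w x * p x^2 ≤ lambar/4 * p x^2 := by gcongr
        have g2 : -(k * convol qker p x * p x) ≤ lambar/4 * p x^2
            + k^2/lambar * (convol qker p x)^2 := by
          have : lambar/4 * p x^2 + k^2/lambar * (convol qker p x)^2 + k * convol qker p x * p x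
            = (lambar * p x + 2 * k * convol qker p x)^2/(4*lambar) := by field_simp; ring
          have h' : 0 ≤ (lambar * p x + 2 * k * convol qker p x)^2/(4*lambar) := by positivity
          linarith
        have g3 : k^2/lambar * (convol qker p x)^2 ≤ k^2/lambar * (1/16*n) := by
          gcongr; exact hu x
        have g4 : k^2/lambar * (1/16*n) = k^2*n/(16*lambar) := by field_simp
        linarith
      · push Not at hx
        simp [hp, hx.1, hx.2]
    have hr : Integrable (fun x => k^2*n/(16*lambar) * (A1.indicator (fun _ => (1:ℝ)) x
        + A2.indicator (fun _ => (1:ℝ)) x)) := (i1.add i2).const_mul _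
    have hl' : Integrable (fun x => (w x * p x - k * convol qker p x) * p x) :=
      mul_int (dpOp w k hc hb ⟨p, hpL⟩).2 hpL
    have hint := integral_mono hl' ((hpL.integrable_sq.const_mul (lambar/2)).add hr) hpt
    simp only [Pi.add_apply] at hint
    rw [integral_add (hpL.integrable_sq.const_mul (lambar/2)) hr, integral_const_mul,
      integral_const_mul, integral_add i1 i2, e1, e2] at hint
    refine lt_of_le_of_lt hint ?_
    have : k^2*n/(16*lambar) * (h+h) ≤ lambar/4*n := by
      calc k^2*n/(16*lambar) * (h+h) ≤ k^2*n/(16*lambar) * (2*lambar^2/k^2+2*lambar^2/k^2) := by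
            gcongr
        _ = lambar/4*n := by field_simp; norm_num
    have h4 : 0 < lambar * n := by positivity
    linarith

/-- coercivity of the linearized quadratic form.  Under the spectral
hypotheses (i)–(v) on `𝓛f = -φf - 2κ q*f + c(f - 3q*f)`, vectors `y ∈ L²` that
are almost orthogonal (in the `S`-inner product) to `φ` and `φ'` satisfy
`(𝓛y, y) ≥ θ‖y‖²`. -/
theorem stmt_5 (κ c : ℝ) (hκ : 0 < κ) (hc : 2*κ < c)
    (φ : ℝ → ℝ) (hφcont : Continuous φ) (hφbdd : ∃ M, ∀ x, |φ x| ≤ M)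
    (hφ'L2 : MemLp (deriv φ) 2 volume) (hφ'ne : ∃ x, deriv φ x ≠ 0)
    (Lop : (ℝ → ℝ) → (ℝ → ℝ))
    (hLop : ∀ f x, Lop f x
      = -(φ x) * f x - 2*κ * convol qker f x + c * (f x - 3 * convol qker f x))
    -- (i) 𝓛φ' = 0
    (hker : ∀ x, Lop (deriv φ) x = 0)
    -- (ii) a negative simple eigenvalue -λ̲ with normalized eigenfunction χ
    (lam : ℝ) (hlam : 0 < lam)
    (χ : ℝ → ℝ) (hχL2 : MemLp χ 2 volume) (hχnorm : (∫ x, (χ x)^2) = 1)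
    (hχeig : ∀ x, Lop χ x = -lam * χ x)
    -- (iii) coercivity on the orthogonal complement of span{χ, φ'}
    (lambar : ℝ) (hlambar : 0 < lambar)
    (hcoer : ∀ p : ℝ → ℝ, MemLp p 2 volume →
      (∫ x, p x * χ x) = 0 → (∫ x, p x * deriv φ x) = 0 →
      lambar * (∫ x, (p x)^2) ≤ ∫ x, Lop p x * p x)
    -- (iv) invariance of X₊ = (span{χ, φ'})^⊥ under 𝓛
    (hinv : ∀ f : ℝ → ℝ, MemLp f 2 volume →
      (∫ x, f x * χ x) = 0 → (∫ x, f x * deriv φ x) = 0 →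
      (∫ x, Lop f x * χ x) = 0 ∧ (∫ x, Lop f x * deriv φ x) = 0)
    -- (v) 𝓛ζ = -(φ - 3q*φ) with (𝓛ζ, ζ) < 0
    (ζ : ℝ → ℝ) (hζL2 : MemLp ζ 2 volume)
    (hζeq : ∀ x, Lop ζ x = -(φ x - 3 * convol qker φ x))
    (hζneg : (∫ x, Lop ζ x * ζ x) < 0) :
    ∃ η > 0, ∃ θ > 0, ∀ y : ℝ → ℝ, MemLp y 2 volume →
      |∫ x, y x * (φ x - 3 * convol qker φ x)|
        + |∫ x, y x * (deriv φ x - 3 * convol qker (deriv φ) x)|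
        ≤ η * (eLpNorm y 2 volume).toReal →
      θ * ((eLpNorm y 2 volume).toReal)^2 ≤ ∫ x, Lop y x * y x := by
  set w : ℝ → ℝ := fun x => c - φ x with hw
  set k : ℝ := 2*κ + 3*c with hk
  have hk0 : 0 < k := by rw [hk]; linarith
  have hwc : Continuous w := by fun_prop
  have hwb : ∃ M, ∀ x, |w x| ≤ M := by
    obtain ⟨M, hM⟩ := hφbdd
    exact ⟨|c| + M, fun x => (abs_sub _ _).trans (by linarith [hM x])⟩
  have hL : ∀ f x, Lop f x = w x * f x - k * convol qker f x := by
    intro f x; rw [hLop, hw, hk]; ring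
  have hee : 0 < ∫ x, (deriv φ x)^2 := by
    refine lt_of_le_of_ne (integral_nonneg fun x => sq_nonneg _) (fun h0 => ?_)
    have hz : (fun x => (deriv φ x)^2) =ᵐ[volume] 0 :=
      (integral_eq_zero_iff_of_nonneg (fun x => sq_nonneg _) hφ'L2.integrable_sq).1 h0.symm
    have hz' : ∀ᵐ x, deriv φ x = 0 := by
      filter_upwards [hz] with x hx
      simpa using hx
    obtain ⟨x0, hx0⟩ := hφ'ne
    have hcz : convol qker (deriv φ) x0 = 0 := by
      unfold convol
      rw [integral_eq_zero_of_ae]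
      filter_upwards [hz'] with x hx
      simp [hx]
    have hk1 := hker x0
    rw [hL, hcz, mul_zero, sub_zero] at hk1
    have hw0 : w x0 = 0 := (mul_eq_zero.1 hk1).resolve_right hx0
    obtain ⟨p, hp, hpχ, hlt⟩ := local_test w k lambar hk0 hlambar hwc hwb x0 hw0 χ hχL2
    have hpe : ∫ x, p x * deriv φ x = 0 := by
      rw [integral_eq_zero_of_ae]
      filter_upwards [hz'] with x hx
      simp [hx]
    have h3 := hcoer p hp hpχ hpe
    simp_rw [hL] at h3
    linarith
  let T := dpOp w k hwc hwb
  have hT : ∀ f g : L2V, Iform (T f) g = ∫ x, Lop f.1 x * g.1 x := by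
    intro f g
    simp_rw [hL]; rfl
  have hI : ∀ f g : L2V, Iform f g = ∫ x, f.1 x * g.1 x := fun f g => rfl
  have hII : ∀ f : L2V, Iform f f = ∫ x, (f.1 x)^2 := fun f => by
    rw [hI]; congr 1; ext x; ring
  have hgL : MemLp (fun x => deriv φ x - 3 * convol qker (deriv φ) x) 2 volume :=
    hφ'L2.sub ((q_memLp hφ'L2).const_mul 3)
  obtain ⟨η, hη, θ, hθ, H⟩ := dp_abstract Iform (Iform ∘ₗ T)
    (fun u v => by rw [hI, hI]; congr 1; ext x; ring)
    (fun u => by rw [hII]; exact integral_nonneg fun x => sq_nonneg _)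
    (fun u v => Bsymm w k hwc hwb u v)
    ⟨χ, hχL2⟩ ⟨deriv φ, hφ'L2⟩ ⟨ζ, hζL2⟩ ⟨_, hgL⟩ lam lambar hlam hlambar
    (by rw [hII]; exact hχnorm)
    (fun y => by
      rw [LinearMap.comp_apply, hT, hI, ← integral_const_mul]
      congr 1; ext x; simp only [hχeig]; ring)
    (fun y => by
      rw [LinearMap.comp_apply, hT]; simp only [hker, zero_mul, integral_zero])
    (by rw [hII]; exact hee)
    (by
      rw [hI]
      have h1 := q_form_le hφ'L2
      have h2 : ∫ x, deriv φ x * (deriv φ x - 3 * convol qker (deriv φ) x)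
          = (∫ x, (deriv φ x)^2) - 3 * ∫ x, convol qker (deriv φ) x * deriv φ x := by
        rw [← integral_const_mul, ← integral_sub hφ'L2.integrable_sq
          ((mul_int (q_memLp hφ'L2) hφ'L2).const_mul 3)]
        congr 1; ext x; ring
      simp only [h2]
      linarith)
    (fun p h1 h2 => by
      rw [LinearMap.comp_apply, hT, hII]
      exact hcoer p.1 p.2 h1 h2)
    (by rw [LinearMap.comp_apply, hT]; exact hζneg)
  refine ⟨η, hη, θ, hθ, fun y hy hyle => ?_⟩
  have h := H ⟨y, hy⟩
  simp only [LinearMap.comp_apply, hT, hII] at h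
  rw [norm_eq hy] at hyle ⊢
  rw [Real.sq_sqrt (integral_nonneg fun x => sq_nonneg _)]
  apply h
  refine le_trans (le_of_eq ?_) hyle
  congr 1
  rw [← abs_neg, ← integral_neg]
  congr 2; ext x
  rw [hζeq]; ring
end
end
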